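/- Let n be a natural number with prime factorisation n = p_1^{α_1} ⋯ p_t^{α_t} (the p_i distinct primes). Then every skew brace of order n is λ-homomorphic if and only if α_i ≤ 2 for every i and p_i does not divide p_j^{α_j} − 1 for all i ≠ j. -/

import Mathlib

/-- A skew (left) brace: a set with two group structures `(A,+)` and `(A,∘)`
(the latter written multiplicatively) satisfying
`a ∘ (b + c) = a ∘ b - a + a ∘ c`. -/
class SkewBrace (A : Type*) extends AddGroup A, Group A where
  skew_left_distrib : ∀ a b c : A, a * (b + c) = a * b - a + a * c

/-!
Call `n` an abelian number if it satisfies the arithmetic condition of the theorem. By Burnside's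
transfer theorem all groups of such an order are abelian, so a skew brace `A` of order `n` is a
commutative radical ring under `a ∗ b = λ_a(b) - b`, and being λ-homomorphic means that
`a ∗ (b ∗ c) = 0`. Multiplications in a finite radical ring are nilpotent, so each prime dividing
the order of `A ∗ b ∗ c` divides the order of `A` at least three times; cube-freeness leaves
`A ∗ b ∗ c = 0`.

Conversely, if all skew braces of order `n` are λ-homomorphic, then so are those whose order divides
`n`, as one sees by taking products. The operation `a ∘ b = a + b + p * a * b` on `ZMod (p ^ 3)`
rules out `p ^ 3 ∣ n`. When `p ∣ q ^ α - 1`, an element of order `p` in the unit group of the field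
with `q ^ α` elements acts on the field by multiplication; the semidirect product is not nilpotent
of class two, so its almost trivial skew brace `a ∘ b = b + a`, whose lambda map is conjugation, is
not λ-homomorphic.
-/

/-- The orders `n` for which, by a classical theorem, all groups of order `n` are abelian, described
by the prime factorisation of `n`. -/
structure IsAbelianNumber (n : ℕ) : Prop where
  factorization_le_two : ∀ p ∈ n.primeFactors, n.factorization p ≤ 2
  not_dvd_pow_sub_one : ∀ p ∈ n.primeFactors, ∀ q ∈ n.primeFactors, p ≠ q →
    ¬ p ∣ q ^ n.factorization q - 1

theorem IsAbelianNumber.not_pow_three_dvd {n : ℕ} (h : IsAbelianNumber n) (hn : n ≠ 0) {p : ℕ}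
    (hp : p.Prime) : ¬ p ^ 3 ∣ n := by
  intro hdvd
  have hmem : p ∈ n.primeFactors :=
    Nat.mem_primeFactors.2 ⟨hp, dvd_of_mul_left_dvd (pow_succ p 2 ▸ hdvd), hn⟩
  have hge := (hp.pow_dvd_iff_le_factorization hn).1 hdvd
  have hle := h.factorization_le_two p hmem
  omega

section Group

open Subgroup

theorem index_fixedPoints_modEq_one {q : ℕ} [Fact q.Prime] {M P : Type*} [Group M] [Group P]
    [Finite P] [MulDistribMulAction M P] (hM : IsPGroup q M) (hq : ¬ q ∣ Nat.card P) :
    (FixedPoints.subgroup M P).index ≡ 1 [MOD q] := by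
  set F := FixedPoints.subgroup M P
  have hcop : q.gcd (Nat.card F) = 1 :=
    ((Fact.out : q.Prime).coprime_iff_not_dvd).2 fun h => hq (h.trans F.card_subgroup_dvd_card)
  refine Nat.ModEq.cancel_left_of_coprime hcop ?_
  rw [card_mul_index, mul_one]
  exact hM.card_modEq_card_fixedPoints P

theorem eq_zero_of_pow_modEq_one {p q a i : ℕ} (hp : p ≠ 0) (ha : a ≤ 2) (hi : i ≤ a)
    (hq : ¬ q ∣ p ^ a - 1) (h : p ^ i ≡ 1 [MOD q]) : i = 0 := by
  by_contra hne
  have hia : i ∣ a := by interval_cases a <;> interval_cases i <;> simp_all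
  obtain ⟨k, rfl⟩ := hia
  have hpow : 1 ≡ p ^ (i * k) [MOD q] := by simpa only [pow_mul, one_pow] using (h.pow k).symm
  exact hq ((Nat.modEq_iff_dvd' (Nat.one_le_pow _ _ (Nat.pos_of_ne_zero hp))).1 hpow)

theorem not_dvd_card_mulAut {P : Type*} [Group P] [Finite P] {p q a : ℕ} (hp : p.Prime)
    (hq : q.Prime) (hqp : q ≠ p) (hP : Nat.card P = p ^ a) (ha : a ≤ 2) (hnd : ¬ q ∣ p ^ a - 1) :
    ¬ q ∣ Nat.card (MulAut P) := by
  intro hdvd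
  have := Fact.mk hq
  obtain ⟨σ, hσ⟩ := exists_prime_orderOf_dvd_card' q hdvd
  set F := FixedPoints.subgroup (zpowers σ) P
  have hF : F.index ≡ 1 [MOD q] := by
    refine index_fixedPoints_modEq_one (IsPGroup.of_card (n := 1) ?_) fun h => hqp ?_
    · rw [Nat.card_zpowers, hσ, pow_one]
    · exact (Nat.prime_dvd_prime_iff_eq hq hp).1 (hq.dvd_of_dvd_pow (hP ▸ h))
  obtain ⟨i, hi, hindex⟩ := (Nat.dvd_prime_pow hp).1 (hP ▸ F.index_dvd_card)
  have hi0 : i = 0 := eq_zero_of_pow_modEq_one hp.ne_zero ha hi hnd (hindex ▸ hF)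
  have hFtop : F = ⊤ := index_eq_one.1 (by rw [hindex, hi0, pow_zero])
  have hσ1 : σ = 1 := MulEquiv.ext fun x =>
    (show x ∈ F from hFtop ▸ mem_top x) ⟨σ, mem_zpowers σ⟩
  exact hq.one_lt.ne (by rw [← hσ, hσ1, orderOf_one])

theorem relIndex_centralizer_normalizer_dvd_card_mulAut {G : Type*} [Group G] (H : Subgroup G) :
    (centralizer (H : Set G)).relIndex (normalizer (H : Set G)) ∣ Nat.card (MulAut H) := by
  rw [relIndex, ← H.normalizerMonoidHom_ker, index_ker]
  exact card_subgroup_dvd_card _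

theorem isMulCommutative_of_card_eq_prime_pow {P : Type*} [Group P] {p a : ℕ} [Fact p.Prime]
    (hP : Nat.card P = p ^ a) (ha : a ≤ 2) : IsMulCommutative P := by
  interval_cases a
  · have := (Nat.card_eq_one_iff_unique.1 (hP.trans (pow_zero p))).1
    exact ⟨⟨fun _ _ => Subsingleton.elim _ _⟩⟩
  · have := isCyclic_of_prime_card (hP.trans (pow_one p))
    infer_instance
  · exact IsPGroup.isMulCommutative_of_card_eq_prime_sq hP

variable {G : Type*} [Group G] [Finite G]

theorem IsAbelianNumber.normalizer_le_centralizer (hG : IsAbelianNumber (Nat.card G)) {p : ℕ}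
    (hp : p ∈ (Nat.card G).primeFactors) [Fact p.Prime] (P : Sylow p G) :
    normalizer (P : Set G) ≤ centralizer (P : Set G) := by
  have hcard : Nat.card P = p ^ (Nat.card G).factorization p := P.card_eq_multiplicity
  have hle := hG.factorization_le_two p hp
  have hcomm : IsMulCommutative P := isMulCommutative_of_card_eq_prime_pow hcard hle
  rw [← relIndex_eq_one, Nat.eq_one_iff_not_exists_prime_dvd]
  intro q hq hdvd
  have hq_index : q ∣ (P : Subgroup G).index :=
    hdvd.trans ((relIndex_dvd_of_le_left _ (P : Subgroup G).le_centralizer).trans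
      (relIndex_dvd_index_of_le (P : Subgroup G).le_normalizer))
  have hqp : q ≠ p := by
    rintro rfl
    exact P.not_dvd_index hq_index
  have hqG : q ∈ (Nat.card G).primeFactors :=
    Nat.mem_primeFactors.2 ⟨hq, hq_index.trans (P : Subgroup G).index_dvd_card, Nat.card_pos.ne'⟩
  exact not_dvd_card_mulAut Fact.out hq hqp hcard hle (hG.not_dvd_pow_sub_one q hqG p hp hqp)
    (hdvd.trans (relIndex_centralizer_normalizer_dvd_card_mulAut _))

open scoped IsMulCommutative in
theorem IsAbelianNumber.isMulCommutative (hG : IsAbelianNumber (Nat.card G)) :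
    IsMulCommutative G := by
  rw [← commutator_eq_bot_iff, ← card_eq_one, Nat.eq_one_iff_not_exists_prime_dvd]
  intro p hp hdvd
  have := Fact.mk hp
  have hpG : p ∈ (Nat.card G).primeFactors :=
    Nat.mem_primeFactors.2 ⟨hp, hdvd.trans (card_subgroup_dvd_card _), Nat.card_pos.ne'⟩
  obtain ⟨P⟩ : Nonempty (Sylow p G) := inferInstance
  have hP := hG.normalizer_le_centralizer hpG P
  have : IsMulCommutative P := le_centralizer_iff_isMulCommutative.1 (le_normalizer.trans hP)
  exact MonoidHom.not_dvd_card_ker_transferSylow P hP (hdvd.trans (card_dvd_of_le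
    (Abelianization.commutator_subset_ker (MonoidHom.transferSylow P hP))))

end Group

section AddGroup

theorem exists_iterate_ne_zero_map_eq_zero {M : Type*} [Zero M] {f : M → M} {k : ℕ} {x : M}
    (hx : x ≠ 0) (hk : f^[k] x = 0) : ∃ j, f^[j] x ≠ 0 ∧ f (f^[j] x) = 0 := by
  induction k generalizing x with
  | zero => exact absurd hk hx
  | succ k ih =>
    by_cases hfx : f x = 0
    · exact ⟨0, hx, hfx⟩
    · obtain ⟨j, hj⟩ := ih hfx hk
      exact ⟨j + 1, hj⟩

variable {M : Type*} [AddGroup M] [Finite M] {f : M →+ M} {N : AddSubgroup M}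

theorem dvd_card_ker_addSubgroupOf (hf : ∀ x, ∃ k, f^[k] x = 0) (hN : N.map f ≤ N) {p : ℕ}
    (hp : p.Prime) (hpN : p ∣ Nat.card N) : p ∣ Nat.card (f.ker.addSubgroupOf N) := by
  have := Fact.mk hp
  obtain ⟨x, hx⟩ := exists_prime_addOrderOf_dvd_card' p hpN
  have hx0 : (x : M) ≠ 0 := fun h => by
    rw [← AddSubgroup.addOrderOf_coe, h, addOrderOf_zero] at hx
    exact hp.one_lt.ne hx
  obtain ⟨k, hk⟩ := hf x
  obtain ⟨j, hj0, hjker⟩ := exists_iterate_ne_zero_map_eq_zero hx0 hk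
  have hmaps : Set.MapsTo f N N := fun y hy => hN ⟨y, hy, rfl⟩
  let y : f.ker.addSubgroupOf N := ⟨⟨f^[j] x, hmaps.iterate j x.2⟩, hjker⟩
  have hy : addOrderOf (f^[j] (x : M)) = p := by
    refine addOrderOf_eq_prime ?_ hj0
    rw [← iterate_map_nsmul, ← AddSubgroup.coe_nsmul, ← hx, addOrderOf_nsmul_eq_zero,
      AddSubgroup.coe_zero, iterate_map_zero]
  have hyp : addOrderOf y = p := by
    rw [← hy, ← AddSubgroup.addOrderOf_coe, ← AddSubgroup.addOrderOf_coe]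
  exact hyp ▸ addOrderOf_dvd_natCard y

theorem mul_card_map_dvd_card (hf : ∀ x, ∃ k, f^[k] x = 0) (hN : N.map f ≤ N) {p : ℕ}
    (hp : p.Prime) (hpN : p ∣ Nat.card (N.map f)) : p * Nat.card (N.map f) ∣ Nat.card N := by
  have hcard : Nat.card (f.ker.addSubgroupOf N) * Nat.card (N.map f) = Nat.card N := by
    rw [← AddSubgroup.relIndex_ker, AddSubgroup.relIndex, AddSubgroup.card_mul_index]
  have hker := dvd_card_ker_addSubgroupOf hf hN hp (hpN.trans (hcard ▸ dvd_mul_left _ _))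
  exact hcard ▸ mul_dvd_mul_right hker _

end AddGroup

section Ring

open AddMonoidHom (mulRight)

theorem eq_zero_of_mul_eq_self {R : Type*} [NonUnitalRing R] {z w : R}
    (hw : IsQuasiregular (-w)) (h : z * w = z) : z = 0 := by
  obtain ⟨y, hy, -⟩ := isQuasiregular_iff.1 hw
  have := congrArg (z * ·) hy
  simpa [mul_add, ← mul_assoc, h] using this

theorem iterate_succ_mulRight_apply {R : Type*} [NonUnitalRing R] (b x : R) (k : ℕ) :
    (mulRight b)^[k + 1] x = x * (mulRight b)^[k] b := by
  induction k with
  | zero => rfl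
  | succ k ih =>
    rw [Function.iterate_succ_apply', ih, AddMonoidHom.mulRight_apply, mul_assoc,
      Function.iterate_succ_apply', AddMonoidHom.mulRight_apply]

theorem exists_iterate_mulRight_eq_zero {R : Type*} [NonUnitalRing R] [Finite R]
    (hR : ∀ w : R, IsQuasiregular w) (b x : R) : ∃ k, (mulRight b)^[k] x = 0 := by
  obtain ⟨i, j, hij, hit⟩ := Set.finite_univ.exists_lt_map_eq_of_forall_mem
    (f := fun n : ℕ => (mulRight b)^[n] x) fun _ => Set.mem_univ _
  obtain ⟨k, rfl⟩ := Nat.exists_eq_add_of_lt hij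
  refine ⟨i, eq_zero_of_mul_eq_self (hR (-(mulRight b)^[k] b)) ?_⟩
  rw [← iterate_succ_mulRight_apply, ← Function.iterate_add_apply, hit, Nat.add_right_comm,
    Nat.add_comm i]

variable {R : Type*} [NonUnitalCommRing R] [Finite R]

theorem pow_three_dvd_card_of_dvd_card_map_mulRight (hR : ∀ w : R, IsQuasiregular w) (a b : R)
    {p : ℕ} (hp : p.Prime)
    (hpdvd : p ∣ Nat.card ((mulRight a).range.map (mulRight b))) : p ^ 3 ∣ Nat.card R := by
  have hmap : (mulRight a).range.map (mulRight b) ≤ (mulRight a).range := by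
    rintro _ ⟨_, ⟨x, rfl⟩, rfl⟩
    exact ⟨x * b, mul_right_comm x b a⟩
  have hRab := mul_card_map_dvd_card (exists_iterate_mulRight_eq_zero hR b) hmap hp hpdvd
  have hRa : p ∣ Nat.card (mulRight a).range := (dvd_mul_right _ _).trans hRab
  rw [(mulRight a).range_eq_map] at hRa
  have hRdvd := mul_card_map_dvd_card (exists_iterate_mulRight_eq_zero hR a) le_top hp hRa
  rw [← (mulRight a).range_eq_map, AddSubgroup.card_top] at hRdvd
  calc p ^ 3 = p * (p * p) := by ring
    _ ∣ p * (p * Nat.card ((mulRight a).range.map (mulRight b))) := by gcongr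
    _ ∣ p * Nat.card (mulRight a).range := mul_dvd_mul_left p hRab
    _ ∣ Nat.card R := hRdvd

theorem mul_mul_eq_zero_of_isQuasiregular (hR : ∀ w : R, IsQuasiregular w)
    (hcard : ∀ p : ℕ, p.Prime → ¬ p ^ 3 ∣ Nat.card R) (a b c : R) : a * b * c = 0 := by
  have hbot : (mulRight b).range.map (mulRight c) = ⊥ := by
    rw [← AddSubgroup.card_eq_one, Nat.eq_one_iff_not_exists_prime_dvd]
    exact fun p hp hdvd => hcard p hp (pow_three_dvd_card_of_dvd_card_map_mulRight hR b c hp hdvd)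
  exact (AddSubgroup.mem_bot).1 (hbot ▸ ⟨_, ⟨a, rfl⟩, rfl⟩)

end Ring

namespace SkewBrace

section Lambda

variable {A : Type*} [SkewBrace A]

/-- The automorphism `λ_a : b ↦ -a + a ∘ b` of the additive group, as an endomorphism. -/
def lambda (a : A) : A →+ A :=
  AddMonoidHom.mk' (fun b => -a + a * b) fun b c => by
    rw [skew_left_distrib, sub_eq_add_neg, add_assoc, add_assoc]

theorem mul_eq_add_lambda (a b : A) : a * b = a + lambda a b :=
  (add_neg_cancel_left a (a * b)).symm

theorem zero_eq_one : (0 : A) = 1 := by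
  rw [← mul_eq_left (a := (1 : A)), mul_eq_add_lambda, map_zero, add_zero]

theorem lambda_mul (a b x : A) : lambda (a * b) x = lambda a (lambda b x) := by
  refine add_left_cancel (a := a * b) ?_
  rw [← mul_eq_add_lambda, mul_assoc, mul_eq_add_lambda b, mul_eq_add_lambda a, map_add,
    ← add_assoc, ← mul_eq_add_lambda]

variable (A) in
/-- A skew brace is λ-homomorphic if `a ↦ λ_a` is a homomorphism on the additive group as well. -/
def IsLambdaHomomorphic : Prop :=
  ∀ a b x : A, lambda (a + b) x = lambda a (lambda b x)

/-- The operation `a ∗ b = λ_a(b) - b`, the multiplication of the associated radical ring when the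
skew brace is commutative. -/
def star (a b : A) : A := lambda a b - b

theorem lambda_eq_star_add (a b : A) : lambda a b = star a b + b :=
  (sub_add_cancel _ _).symm

theorem lambda_lambda (a b x : A) :
    lambda a (lambda b x) = star a (star b x) + star b x + star a x + x := by
  rw [lambda_eq_star_add b x, map_add, lambda_eq_star_add a x, lambda_eq_star_add, ← add_assoc]

theorem star_zero (a : A) : star a 0 = 0 := by
  rw [star, map_zero, sub_zero]

theorem star_mul (a b x : A) :
    star (a * b) x = star a (star b x) + star b x + star a x := by
  rw [star, lambda_mul, lambda_lambda, add_sub_cancel_right]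

end Lambda

section Comm

open scoped IsMulCommutative

variable {A : Type*} [SkewBrace A] [IsAddCommutative A]

theorem mul_eq_add_add_star (a b : A) : a * b = a + b + star a b := by
  rw [mul_eq_add_lambda, lambda_eq_star_add, add_comm (star a b), ← add_assoc]

theorem star_add (a b x : A) : star x (a + b) = star x a + star x b := by
  simp only [star, map_add, add_sub_add_comm]

variable [IsMulCommutative A]

theorem star_comm (a b : A) : star a b = star b a := by
  refine add_left_cancel (a := a + b) ?_
  rw [← mul_eq_add_add_star, mul_comm' a b, add_comm a b, ← mul_eq_add_add_star]

theorem add_star (a b x : A) : star (a + b) x = star a x + star b x := by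
  rw [star_comm, star_add, star_comm x, star_comm x]

theorem zero_star (a : A) : star 0 a = 0 := by
  rw [star_comm, star_zero]

theorem star_assoc (a b x : A) : star (star a b) x = star a (star b x) := by
  have h := star_mul a b x
  rw [mul_eq_add_add_star, add_star, add_star, add_comm, add_comm (star a x), ← add_assoc] at h
  exact add_right_cancel (add_right_cancel h)

theorem isLambdaHomomorphic_iff_star_star_eq_zero :
    IsLambdaHomomorphic A ↔ ∀ a b x : A, star a (star b x) = 0 := by
  refine forall₃_congr fun a b x => ?_
  rw [lambda_lambda, lambda_eq_star_add, add_star, add_right_cancel_iff, add_comm (star a x),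
    add_right_cancel_iff, right_eq_add]

end Comm

section RadicalRing

open scoped IsMulCommutative

/-- The radical ring associated with a commutative skew brace: the additive group of `A` with
multiplication `∗`. It is a type synonym because `*` on `A` already denotes `∘`. -/
def RadicalRing (A : Type*) : Type _ := A

variable {A : Type*} [SkewBrace A] [IsAddCommutative A] [IsMulCommutative A]

instance : NonUnitalCommRing (RadicalRing A) where
  __ := (inferInstance : AddCommGroup A)
  mul a b := star (A := A) a b
  left_distrib a b c := star_add (A := A) b c a
  right_distrib := add_star (A := A)
  zero_mul := zero_star (A := A)
  mul_zero := star_zero (A := A)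
  mul_assoc := star_assoc (A := A)
  mul_comm := star_comm (A := A)

theorem RadicalRing.isQuasiregular (w : RadicalRing A) : IsQuasiregular w := by
  let v : A := w
  have h₁ : v⁻¹ + v + star v v⁻¹ = 0 := by
    rw [add_comm v⁻¹, ← mul_eq_add_add_star, mul_inv_cancel, zero_eq_one]
  have h₂ : v + v⁻¹ + star v⁻¹ v = 0 := by
    rw [add_comm v, ← mul_eq_add_add_star, inv_mul_cancel, zero_eq_one]
  exact isQuasiregular_iff.2 ⟨(v⁻¹ : A), h₁, h₂⟩

theorem isLambdaHomomorphic_of_forall_not_pow_three_dvd [Finite A]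
    (hcard : ∀ p : ℕ, p.Prime → ¬ p ^ 3 ∣ Nat.card A) : IsLambdaHomomorphic A := by
  have : Finite (RadicalRing A) := ‹Finite A›
  refine isLambdaHomomorphic_iff_star_star_eq_zero.2 fun a b x => ?_
  rw [← star_assoc]
  exact mul_mul_eq_zero_of_isQuasiregular (R := RadicalRing A) RadicalRing.isQuasiregular hcard
    a b x

end RadicalRing

end SkewBrace

theorem IsAbelianNumber.isLambdaHomomorphic {A : Type*} [SkewBrace A] [Finite A]
    (hA : IsAbelianNumber (Nat.card A)) : SkewBrace.IsLambdaHomomorphic A := by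
  have : IsMulCommutative A := hA.isMulCommutative
  have : IsMulCommutative (Multiplicative A) := IsAbelianNumber.isMulCommutative hA
  have : IsAddCommutative A := .of_comm fun a b =>
    congrArg Multiplicative.toAdd (mul_comm' (Multiplicative.ofAdd a) (Multiplicative.ofAdd b))
  exact SkewBrace.isLambdaHomomorphic_of_forall_not_pow_three_dvd fun p hp =>
    hA.not_pow_three_dvd Nat.card_pos.ne' hp

namespace SkewBrace

section Prod

variable {B C : Type*} [SkewBrace B] [SkewBrace C]

instance : SkewBrace (B × C) where
  __ := (inferInstance : AddGroup (B × C))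
  __ := (inferInstance : Group (B × C))
  skew_left_distrib _ _ _ := Prod.ext (skew_left_distrib _ _ _) (skew_left_distrib _ _ _)

theorem IsLambdaHomomorphic.fst (h : IsLambdaHomomorphic (B × C)) : IsLambdaHomomorphic B :=
  fun a b x => congrArg Prod.fst (h (a, 0) (b, 0) (x, 0))

end Prod

section OfLambda

variable {A : Type*} [AddGroup A] (l : A → AddAut A) (hl : ∀ a b, l (a + l a b) = l a + l b)
include hl

theorem map_zero_of_map_add_apply : l 0 = 0 := by
  simpa only [map_zero, add_zero, right_eq_add] using hl 0 0

theorem map_neg_apply_neg (a : A) : l ((-l a) (-a)) = -l a := by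
  rw [eq_neg_iff_add_eq_zero, add_eq_zero_iff_neg_eq', neg_eq_iff_add_eq_zero, ← hl,
    AddAut.apply_neg_self, add_neg_cancel, map_zero_of_map_add_apply l hl]

/-- The skew brace with prescribed additive group and lambda map `l`, so that
`a ∘ b = a + l a b`. -/
abbrev ofLambda : SkewBrace A where
  mul a b := a + l a b
  one := 0
  inv a := (-l a) (-a)
  mul_assoc a b c := by
    change a + l a b + l (a + l a b) c = a + l a (b + l b c)
    rw [hl, map_add, add_assoc, AddAut.add_apply]
  one_mul a := by
    change 0 + l 0 a = a
    rw [map_zero_of_map_add_apply l hl, zero_add, AddAut.zero_apply]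
  mul_one a := by
    change a + l a 0 = a
    rw [map_zero, add_zero]
  inv_mul_cancel a := by
    change (-l a) (-a) + l ((-l a) (-a)) a = 0
    rw [map_neg_apply_neg l hl, ← map_add, neg_add_cancel, map_zero]
  skew_left_distrib a b c := by
    change a + l a (b + c) = a + l a b - a + (a + l a c)
    rw [map_add, sub_eq_add_neg, add_assoc, add_assoc, neg_add_cancel_left]

theorem lambda_ofLambda (a b : A) : letI := ofLambda l hl; lambda a b = l a b :=
  neg_add_cancel_left a (l a b)

theorem isLambdaHomomorphic_ofLambda_iff :
    letI := ofLambda l hl; IsLambdaHomomorphic A ↔ ∀ a b, l (a + b) = l a + l b := by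
  simp only [IsLambdaHomomorphic, lambda_ofLambda, AddEquiv.ext_iff, AddAut.add_apply]

end OfLambda

end SkewBrace

section SemidirectProduct

open Subgroup
open scoped commutatorElement

theorem commutatorElement_inr_inl {N H : Type*} [Group N] [Group H] (φ : H →* MulAut N) (g : H)
    (n : N) : ⁅(SemidirectProduct.inr g : N ⋊[φ] H), (SemidirectProduct.inl n : N ⋊[φ] H)⁆ =
      SemidirectProduct.inl (φ g n * n⁻¹) := by
  rw [commutatorElement_def, map_mul, SemidirectProduct.inl_aut, map_inv, map_inv]

theorem apply_apply_mul_inv_eq_of_commutator_le_center {N H : Type*} [Group N] [Group H]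
    {φ : H →* MulAut N} (h : commutator (N ⋊[φ] H) ≤ center (N ⋊[φ] H)) (g : H) (n : N) :
    φ g (φ g n * n⁻¹) = φ g n * n⁻¹ := by
  have hmem : (SemidirectProduct.inl (φ g n * n⁻¹) : N ⋊[φ] H) ∈ center (N ⋊[φ] H) := by
    rw [← commutatorElement_inr_inl]
    exact h (commutator_mem_commutator (mem_top _) (mem_top _))
  apply SemidirectProduct.inl_injective (φ := φ)
  rw [SemidirectProduct.inl_aut, mem_center_iff.1 hmem, map_inv, mul_inv_cancel_right]

theorem exists_group_card_eq_and_not_commutator_le_center {p q a : ℕ} [Fact p.Prime]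
    [Fact q.Prime] (ha : a ≠ 0) (hdvd : p ∣ q ^ a - 1) :
    ∃ (G : Type) (_ : Group G), Nat.card G = q ^ a * p ∧ ¬ commutator G ≤ center G := by
  have hF : Nat.card (GaloisField q a) = q ^ a := GaloisField.card q a ha
  have : Finite (GaloisField q a) :=
    Nat.finite_of_card_ne_zero (hF ▸ pow_ne_zero a (Fact.out : q.Prime).ne_zero)
  obtain ⟨u, hu⟩ := exists_prime_orderOf_dvd_card' (G := (GaloisField q a)ˣ) p
    (by rwa [Nat.card_units, hF])
  let φ : zpowers u →* MulAut (Multiplicative (GaloisField q a)) :=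
    (MulAutMultiplicative _).symm.toMonoidHom.comp
      ((DistribMulAction.toAddAut _ _).comp (zpowers u).subtype)
  refine ⟨Multiplicative (GaloisField q a) ⋊[φ] zpowers u, inferInstance, ?_, fun h => ?_⟩
  · rw [SemidirectProduct.card, Nat.card_zpowers, hu, ← hF]
    rfl
  · have hfix : (u : GaloisField q a) * (u * 1 + -1) = u * 1 + -1 := congrArg Multiplicative.toAdd
      (apply_apply_mul_inv_eq_of_commutator_le_center h ⟨u, mem_zpowers u⟩ (.ofAdd 1))
    have hsq : ((u : GaloisField q a) - 1) ^ 2 = 0 := by linear_combination hfix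
    have hu1 : u = 1 := Units.ext (sub_eq_zero.1 (pow_eq_zero_iff two_ne_zero |>.1 hsq))
    rw [hu1, orderOf_one] at hu
    exact (Fact.out : p.Prime).one_lt.ne hu

end SemidirectProduct

namespace SkewBrace

/-- The property of `n` characterised by the theorem: every skew brace of order `n` is
λ-homomorphic. The carriers range over `Type`, which contains every finite skew brace up to
isomorphism. -/
def IsLambdaHomomorphicOrder (n : ℕ) : Prop :=
  ∀ (A : Type) [Fintype A] [SkewBrace A], Fintype.card A = n → IsLambdaHomomorphic A

namespace IsLambdaHomomorphicOrder

variable {n : ℕ} (h : IsLambdaHomomorphicOrder n) (hn : n ≠ 0)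
include h hn

theorem isLambdaHomomorphic_of_card_dvd {A : Type} [SkewBrace A] (hA : Nat.card A ∣ n) :
    IsLambdaHomomorphic A := by
  obtain ⟨k, rfl⟩ := hA
  obtain ⟨hA, hk⟩ := mul_ne_zero_iff.1 hn
  have := NeZero.mk hk
  have := Nat.finite_of_card_ne_zero hA
  have := Fintype.ofFinite A
  let : SkewBrace (ZMod k) := ofLambda (fun _ => 0) fun _ _ => (zero_add 0).symm
  exact (h (A × ZMod k) (by simp)).fst

theorem map_add_of_card_dvd {A : Type} [AddGroup A] (hA : Nat.card A ∣ n) (l : A → AddAut A)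
    (hl : ∀ a b, l (a + l a b) = l a + l b) (a b : A) : l (a + b) = l a + l b := by
  let := ofLambda l hl
  exact (isLambdaHomomorphic_ofLambda_iff l hl).1 (h.isLambdaHomomorphic_of_card_dvd hn hA) a b

open scoped commutatorElement in
theorem commutator_le_center {G : Type} [Group G] (hG : Nat.card G ∣ n) :
    commutator G ≤ Subgroup.center G := by
  -- Conjugation by `-x` is the lambda map of the almost trivial skew brace `x ∘ y = y + x`.
  have hconj (a b : Additive G) := h.map_add_of_card_dvd hn (A := Additive G) hG
    (fun x => AddAut.addConj (-x)) (fun x y => by simp [add_assoc]) (-a) (-b)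
  simp only [neg_add_rev, neg_neg, map_add] at hconj
  have hcomm (a b : G) : MulAut.conj a * MulAut.conj b = MulAut.conj b * MulAut.conj a :=
    MulEquiv.ext fun x => AddEquiv.congr_fun (hconj (.ofMul b) (.ofMul a)) (.ofMul x)
  refine Subgroup.commutator_le.2 fun a _ b _ => Subgroup.mem_center_iff.2 fun x => ?_
  have hab : MulAut.conj ⁅a, b⁆ = 1 := by
    rw [map_commutatorElement, commutatorElement_eq_one_iff_mul_comm.2 (hcomm a b)]
  have hx : ⁅a, b⁆ * x * ⁅a, b⁆⁻¹ = x := by rw [← MulAut.conj_apply, hab, MulAut.one_apply]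
  exact (mul_inv_eq_iff_eq_mul.1 hx).symm

theorem sq_eq_zero_of_isNilpotent {S : Type} [CommRing S] (hS : Nat.card S ∣ n) {t : S}
    (ht : IsNilpotent t) : t ^ 2 = 0 := by
  have hu (a : S) : IsUnit (1 + t * a) :=
    ((Commute.all t a).isNilpotent_mul_right ht).isUnit_one_add
  -- The lambda map of the skew brace `a ∘ b = a + b + t * a * b`.
  have hl := h.map_add_of_card_dvd hn hS (fun a => AddAut.mulLeft (hu a).unit)
    (fun a b => AddEquiv.ext fun x => ?_) 1 1
  · have h₁ : (1 + t * (1 + 1)) * 1 = (1 + t * 1) * ((1 + t * 1) * 1) :=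
      AddEquiv.congr_fun hl (1 : S)
    linear_combination -h₁
  · change (1 + t * (a + (1 + t * a) * b)) * x = (1 + t * a) * ((1 + t * b) * x)
    ring

theorem factorization_le_two {p : ℕ} (hp : p.Prime) : n.factorization p ≤ 2 := by
  by_contra! hlt
  have hdvd : p ^ 3 ∣ n := (hp.pow_dvd_iff_le_factorization hn).2 hlt
  have hnil : IsNilpotent (p : ZMod (p ^ 3)) := ⟨3, mod_cast ZMod.natCast_self (p ^ 3)⟩
  have hsq := h.sq_eq_zero_of_isNilpotent hn (by rwa [Nat.card_zmod]) hnil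
  rw [← Nat.cast_pow, ZMod.natCast_eq_zero_iff, Nat.pow_dvd_pow_iff_le_right hp.one_lt] at hsq
  omega

theorem not_dvd_pow_sub_one {p q : ℕ} (hp : p.Prime) (hq : q.Prime) (hpq : p ≠ q) (hpn : p ∣ n)
    (hqn : q ∣ n) : ¬ p ∣ q ^ n.factorization q - 1 := by
  intro hdvd
  have := Fact.mk hp
  have := Fact.mk hq
  obtain ⟨G, _, hcard, hG⟩ := exists_group_card_eq_and_not_commutator_le_center
    (hq.factorization_pos_of_dvd hn hqn).ne' hdvd
  have hcop : (q ^ n.factorization q).Coprime p :=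
    ((Nat.coprime_primes hq hp).2 hpq.symm).pow_left _
  exact hG (h.commutator_le_center hn (hcard ▸ hcop.mul_dvd_of_dvd_of_dvd (n.ordProj_dvd q) hpn))

end IsLambdaHomomorphicOrder

end SkewBrace

/-- Every skew brace of order `n` is λ-homomorphic (`λ_{a+b} = λ_a λ_b`,
where `λ_a(x) = -a + a ∘ x`) iff the prime factorisation of `n` is cube-free
and `p ∤ q^{α_q} - 1` for distinct primes `p, q` dividing `n`. -/
theorem every_skewBrace_is_lambda_homomorphic_iff (n : ℕ) (hn : 0 < n) :
    (∀ (A : Type) [Fintype A] [SkewBrace A], Fintype.card A = n →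
      (∀ a b x : A, -(a + b) + (a + b) * x = -a + a * (-b + b * x))) ↔
    ((∀ p ∈ n.primeFactors, n.factorization p ≤ 2) ∧
      (∀ p ∈ n.primeFactors, ∀ q ∈ n.primeFactors, p ≠ q →
        ¬ p ∣ q ^ n.factorization q - 1)) := by
  constructor
  · intro (h : SkewBrace.IsLambdaHomomorphicOrder n)
    refine ⟨fun p hp => ?_, fun p hp q hq hpq => ?_⟩
    · exact h.factorization_le_two hn.ne' (Nat.prime_of_mem_primeFactors hp)
    · exact h.not_dvd_pow_sub_one hn.ne' (Nat.prime_of_mem_primeFactors hp)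
        (Nat.prime_of_mem_primeFactors hq) hpq (Nat.dvd_of_mem_primeFactors hp)
        (Nat.dvd_of_mem_primeFactors hq)
  · rintro ⟨hcube, hsub⟩ A _ _ rfl
    rw [← Nat.card_eq_fintype_card] at hcube hsub
    exact IsAbelianNumber.isLambdaHomomorphic ⟨hcube, hsub⟩
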